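/- Let d ≥ 1 and r ≥ 1 be integers, P ∈ Π_r^d, x ∈ S^d, and δ ∈ (0,2]. Then sup_{y ∈ S^d} |P(y)| ≤ (4/δ)^{2r} · sup_{y ∈ B(x,δ)} |P(y)|. -/

import Mathlib

noncomputable section

open MeasureTheory Real Set
open scoped RealInnerProductSpace

/-- Value at `x` of the orthonormalized Jacobi polynomial `p_n^{(α,β)}`. -/
def jacobiP (α β : ℝ) (n : ℕ) (x : ℝ) : ℝ :=
  Real.sqrt ((2 * (n : ℝ) + α + β + 1) / 2 ^ (α + β + 1) *
      (Real.Gamma ((n : ℝ) + α + β + 1) * (n.factorial : ℝ) /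
        (Real.Gamma ((n : ℝ) + α + 1) * Real.Gamma ((n : ℝ) + β + 1)))) *
    (Real.Gamma (α + n + 1) / ((n.factorial : ℝ) * Real.Gamma (α + β + n + 1))) *
    ∑ m ∈ Finset.range (n + 1),
      (n.choose m : ℝ) * (Real.Gamma (α + β + n + m + 1) / Real.Gamma (α + m + 1)) *
        ((x - 1) / 2) ^ m

/-- The kernel `K_n^{(α,β)}(x) = Σ_{ℓ<n} p_ℓ^{(α,β)}(1) p_ℓ^{(α,β)}(x)`. -/
def jacobiK (α β : ℝ) (n : ℕ) (x : ℝ) : ℝ :=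
  ∑ ℓ ∈ Finset.range n, jacobiP α β ℓ 1 * jacobiP α β ℓ x

/-- The unit sphere `S^d ⊂ ℝ^{d+1}`. -/
abbrev Sph (d : ℕ) := Metric.sphere (0 : EuclideanSpace ℝ (Fin (d + 1))) 1

/-- The rotation invariant Riemannian volume probability measure `μ_d^*` on `S^d`. -/
def sphMeasure (d : ℕ) : Measure (Sph d) :=
  ((volume : Measure (EuclideanSpace ℝ (Fin (d + 1)))).toSphere Set.univ)⁻¹ •
    (volume : Measure (EuclideanSpace ℝ (Fin (d + 1)))).toSphere

/-- `f : S^d → ℝ` is the restriction to the sphere of an algebraic polynomial in `d+1`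
variables of total degree `< n`, i.e. `f ∈ Π_n^d`. -/
def IsSphPoly (d : ℕ) (n : ℝ) (f : Sph d → ℝ) : Prop :=
  ∃ p : MvPolynomial (Fin (d + 1)) ℝ, (p.totalDegree : ℝ) < n ∧
    ∀ y : Sph d, f y = MvPolynomial.eval (fun i => (y : EuclideanSpace ℝ (Fin (d + 1))) i) p

/-- Integral of `f` with respect to a signed measure (via the Jordan decomposition). -/
def sInt {X : Type*} [MeasurableSpace X] (ν : SignedMeasure X) (f : X → ℝ) : ℝ :=
  (∫ x, f x ∂ν.toJordanDecomposition.posPart) - ∫ x, f x ∂ν.toJordanDecomposition.negPart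

/-- Integral of `f` over a set `s` with respect to a signed measure. -/
def sIntOn {X : Type*} [MeasurableSpace X] (ν : SignedMeasure X) (s : Set X) (f : X → ℝ) : ℝ :=
  (∫ x in s, f x ∂ν.toJordanDecomposition.posPart) -
    ∫ x in s, f x ∂ν.toJordanDecomposition.negPart

/-- `ν` is a quadrature measure of order `n` on `S^d`. -/
def IsQuadrature (d : ℕ) (n : ℝ) (ν : SignedMeasure (Sph d)) : Prop :=
  ∀ f : Sph d → ℝ, IsSphPoly d n f → sInt ν f = ∫ y, f y ∂sphMeasure d

/-- `ν` satisfies the Marcinkiewicz-Zygmund inequality of order `n` with constant `c`;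
`ν ∈ MZ(d;n)` means this holds for some `c`, and `|||ν|||_{d;n}` is the least such `c`. -/
def IsMZ (d : ℕ) (n : ℝ) (ν : SignedMeasure (Sph d)) (c : ℝ) : Prop :=
  ∀ f : Sph d → ℝ, IsSphPoly d (n / 2) f →
    (∫ y, (f y) ^ 2 ∂ν.totalVariation) ≤ c * ∫ y, (f y) ^ 2 ∂sphMeasure d

/-- `ω_d`, the volume of `S^d`. -/
def omegaS (d : ℕ) : ℝ := 2 * Real.pi ^ (((d : ℝ) + 1) / 2) / Real.Gamma (((d : ℝ) + 1) / 2)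

/-- The reproducing kernel `K_{d;n}` of `Π_n^d`. -/
def sphK (d n : ℕ) (x : ℝ) : ℝ :=
  (omegaS d / omegaS (d - 1)) * jacobiK ((d : ℝ) / 2 - 1) ((d : ℝ) / 2 - 1) n x

/-- The kernel `Φ̃_{d;n,r}`. -/
def PhiTilde (d n : ℕ) (r : ℝ) (x : ℝ) : ℝ :=
  sphK d ((d + 2) * n) x *
    (jacobiP ((d : ℝ) / 2 + r) ((d : ℝ) / 2 - 2) (d * n) x /
      jacobiP ((d : ℝ) / 2 + r) ((d : ℝ) / 2 - 2) (d * n) 1)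

/-- The kernel `Φ_{d;n,r}`. -/
def Phi (d n : ℕ) (r : ℝ) (x : ℝ) : ℝ := PhiTilde d n r x * ((1 + x) / 2) ^ n

/-- The inner product `x·y` of two points of `S^d`. -/
def ip {d : ℕ} (x y : Sph d) : ℝ :=
  ⟪(x : EuclideanSpace ℝ (Fin (d + 1))), (y : EuclideanSpace ℝ (Fin (d + 1)))⟫

/-- The operator `σ_{d;n,r}(ν, f)`. -/
def sigmaOp (d n : ℕ) (r : ℝ) (ν : SignedMeasure (Sph d)) (f : Sph d → ℝ) (x : Sph d) : ℝ :=
  sInt ν (fun y => f y * Phi d n r (ip x y))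

/-- The operator `σ̃_{d;n,r}(ν, f)`. -/
def sigmaTildeOp (d n : ℕ) (r : ℝ) (ν : SignedMeasure (Sph d)) (f : Sph d → ℝ) (x : Sph d) : ℝ :=
  sInt ν (fun y => f y * PhiTilde d n r (ip x y))

/-- The uniform (supremum) norm `‖f‖_∞`. -/
def supNorm {X : Type*} (f : X → ℝ) : ℝ := sSup (Set.range fun x => |f x|)

/-- `E_{d;n}(f)`, the degree of approximation of `f` from `Π_n^d` in the uniform norm. -/
def bestApprox (d : ℕ) (n : ℝ) (f : Sph d → ℝ) : ℝ :=
  sInf {t | ∃ g, IsSphPoly d n g ∧ ∀ y, |f y - g y| ≤ t}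

/-- `dim Π_n^d = (2n+d−2)·Γ(n+d−1)/(Γ(n)·Γ(d+1))` (for `n ≥ 2`). -/
def dimPi (d n : ℕ) : ℝ :=
  (2 * (n : ℝ) + d - 2) * Real.Gamma ((n : ℝ) + d - 1) /
    (Real.Gamma n * Real.Gamma ((d : ℝ) + 1))

/-- Pairs of univariate polynomials representing a function on the unit circle. -/
def CircRep (m : ℕ) (f : ℝ → ℝ → ℝ) : Prop :=
  ∃ A B : Polynomial ℝ, A.degree ≤ m ∧ B.degree + 1 ≤ m ∧
    ∀ c s : ℝ, c ^ 2 + s ^ 2 = 1 → f c s = A.eval c + s * B.eval c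

theorem CircRep.mono {m m' : ℕ} {f : ℝ → ℝ → ℝ} (h : CircRep m f) (hm : m ≤ m') :
    CircRep m' f := by
  obtain ⟨A, B, hA, hB, h⟩ := h
  have : (m : WithBot ℕ) ≤ m' := by exact_mod_cast hm
  exact ⟨A, B, hA.trans this, hB.trans this, h⟩

theorem CircRep.const (a : ℝ) : CircRep 0 (fun _ _ => a) :=
  ⟨Polynomial.C a, 0, by simpa using Polynomial.degree_C_le, by simp, by simp⟩

theorem CircRep.lin (a b : ℝ) : CircRep 1 (fun c s => c * a + s * b) := by
  refine ⟨Polynomial.C a * Polynomial.X, Polynomial.C b, ?_, ?_, ?_⟩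
  · simpa using Polynomial.degree_C_mul_X_le a
  · have : (Polynomial.C b).degree ≤ 0 := Polynomial.degree_C_le
    calc (Polynomial.C b).degree + 1 ≤ 0 + 1 := by gcongr
      _ = ((1 : ℕ) : WithBot ℕ) := by simp
  · intro c s _; simp; ring

theorem CircRep.add {m : ℕ} {f g : ℝ → ℝ → ℝ} (hf : CircRep m f) (hg : CircRep m g) :
    CircRep m (fun c s => f c s + g c s) := by
  obtain ⟨A, B, hA, hB, h⟩ := hf
  obtain ⟨A', B', hA', hB', h'⟩ := hg
  refine ⟨A + A', B + B', ?_, ?_, ?_⟩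
  · exact (Polynomial.degree_add_le _ _).trans (max_le hA hA')
  · calc (B + B').degree + 1 ≤ max B.degree B'.degree + 1 := by
          gcongr; exact Polynomial.degree_add_le _ _
      _ ≤ m := by
          rcases max_choice B.degree B'.degree with e | e <;> rw [e] <;> assumption
  · intro c s hcs
    beta_reduce
    rw [h c s hcs, h' c s hcs]; simp; ring

theorem CircRep.mul {m m' : ℕ} {f g : ℝ → ℝ → ℝ} (hf : CircRep m f) (hg : CircRep m' g) :
    CircRep (m + m') (fun c s => f c s * g c s) := by
  obtain ⟨A, B, hA, hB, h⟩ := hf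
  obtain ⟨A', B', hA', hB', h'⟩ := hg
  have h2 : (1 - Polynomial.X ^ 2 : Polynomial ℝ).degree ≤ 1 + 1 := by
    refine (Polynomial.degree_sub_le _ _).trans (max_le ?_ ?_)
    · refine Polynomial.degree_one_le.trans ?_
      decide
    · refine (Polynomial.degree_X_pow_le 2).trans ?_
      decide
  refine ⟨A * A' + (1 - Polynomial.X ^ 2) * (B * B'), A * B' + A' * B, ?_, ?_, ?_⟩
  · refine (Polynomial.degree_add_le _ _).trans (max_le ?_ ?_)
    · refine (Polynomial.degree_mul_le _ _).trans ?_
      push_cast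
      exact add_le_add hA hA'
    · refine (Polynomial.degree_mul_le _ _).trans ?_
      calc _ ≤ (1 + 1) + (B.degree + B'.degree) :=
            add_le_add h2 (Polynomial.degree_mul_le _ _)
        _ = (B.degree + 1) + (B'.degree + 1) := by abel
        _ ≤ _ := by push_cast; exact add_le_add hB hB'
  · have key : ∀ C D : Polynomial ℝ, ∀ k l : ℕ, C.degree ≤ k → D.degree + 1 ≤ l →
        (C * D).degree + 1 ≤ ((k + l : ℕ) : WithBot ℕ) := by
      intro C D k l hC hD
      calc (C * D).degree + 1 ≤ (C.degree + D.degree) + 1 := by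
            gcongr; exact Polynomial.degree_mul_le _ _
        _ = C.degree + (D.degree + 1) := by abel
        _ ≤ _ := by push_cast; exact add_le_add hC hD
    have k1 := key A B' m m' hA hB'
    have k2 := key A' B m' m hA' hB
    rw [add_comm m' m] at k2
    calc (A * B' + A' * B).degree + 1 ≤ max (A * B').degree (A' * B).degree + 1 := by
          gcongr; exact Polynomial.degree_add_le _ _
      _ ≤ _ := by
          rcases max_choice (A * B').degree (A' * B).degree with e | e <;> rw [e] <;> assumption
  · intro c s hcs
    beta_reduce
    rw [h c s hcs, h' c s hcs]
    have : s ^ 2 = 1 - c ^ 2 := by linarith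
    simp
    linear_combination (B.eval c * B'.eval c) * this

theorem CircRep.pow {m : ℕ} {f : ℝ → ℝ → ℝ} (hf : CircRep m f) (k : ℕ) :
    CircRep (k * m) (fun c s => f c s ^ k) := by
  induction k with
  | zero => simpa using CircRep.const 1
  | succ k ih =>
    simpa [pow_succ, Nat.succ_mul] using ih.mul hf

theorem CircRep.prod {ι : Type*} (t : Finset ι) (k : ι → ℕ) (f : ι → ℝ → ℝ → ℝ)
    (hf : ∀ i, CircRep (k i) (f i)) :
    CircRep (∑ i ∈ t, k i) (fun c s => ∏ i ∈ t, f i c s) := by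
  classical
  induction t using Finset.induction_on with
  | empty => simpa using CircRep.const 1
  | insert a t ha ih =>
    simpa [Finset.sum_insert ha, Finset.prod_insert ha] using (hf a).mul ih

theorem CircRep.sum {ι : Type*} (t : Finset ι) (m : ℕ) (f : ι → ℝ → ℝ → ℝ)
    (hf : ∀ i ∈ t, CircRep m (f i)) :
    CircRep m (fun c s => ∑ i ∈ t, f i c s) := by
  classical
  induction t using Finset.induction_on with
  | empty => simpa using (CircRep.const 0).mono (Nat.zero_le m)
  | insert a t ha ih =>
    simpa [Finset.sum_insert ha] using
      (hf a (by simp)).add (ih fun i hi => hf i (by simp [hi]))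

theorem circRep_mvPoly {σ : Type*} (p : MvPolynomial σ ℝ) (a b : σ → ℝ) :
    CircRep p.totalDegree (fun c s => MvPolynomial.eval (fun i => c * a i + s * b i) p) := by
  simp only [MvPolynomial.eval_eq]
  refine CircRep.sum _ _ _ fun e he => ?_
  have h1 := CircRep.prod e.support (fun i => e i * 1) (fun i c s => (c * a i + s * b i) ^ e i)
    (fun i => (CircRep.lin (a i) (b i)).pow (e i))
  have h2 := (CircRep.const (p.coeff e)).mul h1
  refine h2.mono ?_
  have := MvPolynomial.le_totalDegree he
  simpa [Finsupp.sum] using this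

theorem cheb_T_le (N : ℕ) {u : ℝ} (hu : 1 ≤ u) :
    (Polynomial.Chebyshev.T ℝ N).eval u ≤ (2 * u) ^ N := by
  rw [← Real.cosh_arcosh hu, Polynomial.Chebyshev.T_real_cosh]
  have ht : 0 ≤ Real.arcosh u := Real.arcosh_nonneg hu
  set t := Real.arcosh u
  have h1 : Real.cosh ((N : ℤ) * t) ≤ Real.exp (N * t) := by
    rw [Real.cosh_eq]
    have : Real.exp (-(((N : ℤ) : ℝ) * t)) ≤ Real.exp (N * t) := by
      apply Real.exp_le_exp.2
      have : 0 ≤ (N : ℝ) * t := by positivity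
      push_cast; linarith
    push_cast at this ⊢
    linarith
  refine h1.trans ?_
  rw [Real.exp_nat_mul]
  gcongr
  rw [Real.cosh_eq]
  have := Real.exp_pos (-t)
  linarith

theorem walsh_poly (N : ℕ) (E : Polynomial ℝ) (hE : E.degree ≤ N) (δ K : ℝ) (hδ0 : 0 < δ)
    (hK : 0 < K)
    (hb : ∀ c, 1 - δ ^ 2 / 2 ≤ c → c ≤ 1 → |E.eval c| ≤ K) (c : ℝ) (hc : -1 ≤ c)
    (hc2 : c ≤ 1 - δ ^ 2 / 2) :
    E.eval c ≤ K * (16 / δ ^ 2) ^ N := by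
  have hd2 : 0 < δ ^ 2 := by positivity
  set L : Polynomial ℝ := Polynomial.C (1 - δ ^ 2 / 4) + Polynomial.C (- (δ ^ 2 / 4)) * Polynomial.X
    with hL
  set Q : Polynomial ℝ := Polynomial.C K⁻¹ * E.comp L with hQ
  have hLe : ∀ u, L.eval u = 1 - (u + 1) * δ ^ 2 / 4 := by
    intro u; simp [hL]; ring
  have hLd : L.natDegree ≤ 1 := by
    rw [hL]; compute_degree
  have hQd : Q.degree ≤ N := by
    apply Polynomial.degree_le_of_natDegree_le
    refine (Polynomial.natDegree_C_mul_le _ _).trans ?_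
    refine Polynomial.natDegree_comp_le.trans ?_
    have := Polynomial.natDegree_le_of_degree_le hE
    nlinarith
  have hQb : ∀ x ∈ Set.Icc (-1 : ℝ) 1, |Q.eval x| ≤ 1 := by
    intro u hu
    rw [hQ, Polynomial.eval_mul, Polynomial.eval_C, Polynomial.eval_comp, hLe, abs_mul,
      abs_of_pos (inv_pos.2 hK), inv_mul_le_iff₀ hK, mul_one]
    apply hb
    · nlinarith [hu.1, hu.2]
    · nlinarith [hu.1, hu.2]
  set u : ℝ := (1 - c) * 4 / δ ^ 2 - 1 with hu
  have hu1 : 1 ≤ u := by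
    have : 2 ≤ (1 - c) * 4 / δ ^ 2 := by
      rw [le_div_iff₀ hd2]; linarith
    linarith
  have hu2 : 2 * u ≤ 16 / δ ^ 2 := by
    have : (1 - c) * 4 / δ ^ 2 ≤ 8 / δ ^ 2 := by
      gcongr; linarith
    have e : 16 / δ ^ 2 = 2 * (8 / δ ^ 2) := by ring
    rw [e]; linarith
  have h := Polynomial.Chebyshev.eval_iterate_derivative_le_of_forall_abs_le_one (k := 0)
    hu1 hQd hQb
  simp only [Function.iterate_zero, id] at h
  have hLu : L.eval u = c := by
    rw [hLe, hu]; field_simp; ring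
  rw [hQ, Polynomial.eval_mul, Polynomial.eval_C, Polynomial.eval_comp, hLu,
    inv_mul_le_iff₀ hK] at h
  refine h.trans ?_
  gcongr
  refine (cheb_T_le N hu1).trans ?_
  gcongr

theorem exists_circle {d : ℕ} (hd : 1 ≤ d) (x y : EuclideanSpace ℝ (Fin (d + 1)))
    (hx : ‖x‖ = 1) (hy : ‖y‖ = 1) :
    ∃ v : EuclideanSpace ℝ (Fin (d + 1)), ‖v‖ = 1 ∧ ⟪x, v⟫ = 0 ∧
      ∃ c s : ℝ, c ^ 2 + s ^ 2 = 1 ∧ y = c • x + s • v := by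
  have fin : ∀ (v : EuclideanSpace ℝ (Fin (d + 1))) (c s : ℝ), ‖v‖ = 1 → ⟪x, v⟫ = 0 →
      y = c • x + s • v → c ^ 2 + s ^ 2 = 1 := by
    intro v c s hv hxv h
    have h1 : ⟪y, y⟫ = 1 := by rw [real_inner_self_eq_norm_sq, hy]; norm_num
    have h2 : ⟪x, x⟫ = 1 := by rw [real_inner_self_eq_norm_sq, hx]; norm_num
    have h3 : ⟪v, v⟫ = 1 := by rw [real_inner_self_eq_norm_sq, hv]; norm_num
    rw [h] at h1
    simp only [inner_add_left, inner_add_right, real_inner_smul_left, real_inner_smul_right,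
      hxv, real_inner_comm x v, h2, h3] at h1
    linarith
  have h2 : ⟪x, x⟫ = 1 := by rw [real_inner_self_eq_norm_sq, hx]; norm_num
  set w := y - ⟪x, y⟫ • x with hw
  have hxw : ⟪x, w⟫ = 0 := by
    rw [hw, inner_sub_right, real_inner_smul_right, h2]; ring
  by_cases h0 : w = 0
  · have : ∃ v ∈ (ℝ ∙ x)ᗮ, v ≠ 0 := by
      apply Submodule.exists_mem_ne_zero_of_ne_bot
      intro hbot
      have h1 := Submodule.finrank_add_finrank_orthogonal (ℝ ∙ x)
      rw [hbot, finrank_span_singleton (by rintro rfl; simp at hx)] at h1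
      simp at h1
      omega
    obtain ⟨v, hv, hv0⟩ := this
    rw [Submodule.mem_orthogonal_singleton_iff_inner_right] at hv
    have hn : ‖v‖ ≠ 0 := norm_ne_zero_iff.2 hv0
    have a1 : ‖‖v‖⁻¹ • v‖ = 1 := by
      rw [norm_smul, norm_inv, norm_norm, inv_mul_cancel₀ hn]
    have a2 : ⟪x, ‖v‖⁻¹ • v⟫ = 0 := by rw [real_inner_smul_right, hv, mul_zero]
    have a3 : y = ⟪x, y⟫ • x + (0 : ℝ) • (‖v‖⁻¹ • v) := by
      rw [zero_smul, add_zero]; exact sub_eq_zero.1 h0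
    exact ⟨_, a1, a2, _, _, fin _ _ _ a1 a2 a3, a3⟩
  · have hn : ‖w‖ ≠ 0 := norm_ne_zero_iff.2 h0
    have a1 : ‖‖w‖⁻¹ • w‖ = 1 := by
      rw [norm_smul, norm_inv, norm_norm, inv_mul_cancel₀ hn]
    have a2 : ⟪x, ‖w‖⁻¹ • w⟫ = 0 := by rw [real_inner_smul_right, hxw, mul_zero]
    have a3 : y = ⟪x, y⟫ • x + ‖w‖ • (‖w‖⁻¹ • w) := by
      rw [smul_smul, mul_inv_cancel₀ hn, one_smul, hw]; abel
    exact ⟨_, a1, a2, _, _, fin _ _ _ a1 a2 a3, a3⟩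

/-- Core estimate with a strict positive bound  on the cap. -/
theorem walsh_core (d r : ℕ) (hd : 1 ≤ d) (P : Sph d → ℝ)
    (hP : IsSphPoly d r P) (x : Sph d) (δ : ℝ) (hδ0 : 0 < δ) (hδ2 : δ ≤ 2) (M : ℝ) (hM : 0 < M)
    (hb : ∀ z ∈ Metric.closedBall x δ, |P z| ≤ M) (y : Sph d) :
    |P y| ≤ (4 / δ) ^ (2 * r) * M := by
  obtain ⟨p, hp, hPp⟩ := hP
  have hp' : p.totalDegree + 1 ≤ r := by exact_mod_cast hp
  have hx : ‖(x : EuclideanSpace ℝ (Fin (d + 1)))‖ = 1 := by simpa using x.2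
  have hy : ‖(y : EuclideanSpace ℝ (Fin (d + 1)))‖ = 1 := by simpa using y.2
  obtain ⟨v, hv, hxv, c, s, hcs, hyv⟩ := exists_circle hd x.1 y.1 hx hy
  have hxx : ⟪(x : EuclideanSpace ℝ (Fin (d + 1))), (x : EuclideanSpace ℝ (Fin (d + 1)))⟫ = 1 := by
    rw [real_inner_self_eq_norm_sq, hx]; norm_num
  have hvv : ⟪v, v⟫ = 1 := by rw [real_inner_self_eq_norm_sq, hv]; norm_num
  obtain ⟨A, B, hA, hB, hAB⟩ := circRep_mvPoly p (fun i => x.1 i) (fun i => v i)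
  -- points of the circle
  have hmem : ∀ a b : ℝ, a ^ 2 + b ^ 2 = 1 →
      a • (x : EuclideanSpace ℝ (Fin (d + 1))) + b • v ∈
        Metric.sphere (0 : EuclideanSpace ℝ (Fin (d + 1))) 1 := by
    intro a b hab
    rw [mem_sphere_zero_iff_norm]
    have : ‖a • (x : EuclideanSpace ℝ (Fin (d + 1))) + b • v‖ ^ 2 = 1 := by
      rw [← real_inner_self_eq_norm_sq]
      simp only [inner_add_left, inner_add_right, real_inner_smul_left, real_inner_smul_right,
        hxv, real_inner_comm x.1 v, hxx, hvv]
      linarith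
    have h0 := norm_nonneg (a • (x : EuclideanSpace ℝ (Fin (d + 1))) + b • v)
    nlinarith
  have hval : ∀ (a b : ℝ) (hab : a ^ 2 + b ^ 2 = 1),
      P ⟨_, hmem a b hab⟩ = A.eval a + b * B.eval a := by
    intro a b hab
    rw [hPp, ← hAB a b hab]
    simp
  have hball : ∀ (a b : ℝ) (hab : a ^ 2 + b ^ 2 = 1), 1 - δ ^ 2 / 2 ≤ a →
      |A.eval a + b * B.eval a| ≤ M := by
    intro a b hab ha
    rw [← hval a b hab]
    apply hb
    rw [Metric.mem_closedBall, Subtype.dist_eq, dist_eq_norm]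
    have : ‖a • (x : EuclideanSpace ℝ (Fin (d + 1))) + b • v - x‖ ^ 2 = 2 - 2 * a := by
      rw [← real_inner_self_eq_norm_sq]
      simp only [inner_sub_left, inner_sub_right, inner_add_left, inner_add_right,
        real_inner_smul_left, real_inner_smul_right,
        hxv, real_inner_comm x.1 v, hxx, hvv]
      linarith
    apply le_of_sq_le_sq _ hδ0.le
    change ‖a • (x : EuclideanSpace ℝ (Fin (d + 1))) + b • v - x‖ ^ 2 ≤ _
    rw [this]; linarith
  have hPy : P y = A.eval c + s * B.eval c := by
    rw [← hval c s hcs]; congr 1; exact Subtype.ext hyv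
  have h4 : 2 ≤ 4 / δ := by rw [le_div_iff₀ hδ0]; linarith
  have h41 : 1 ≤ 4 / δ := by linarith
  rcases le_total (1 - δ ^ 2 / 2) c with hc | hc
  · rw [hPy]
    have h1 := hball c s hcs hc
    have h2 : 1 ≤ (4 / δ) ^ (2 * r) := one_le_pow₀ h41
    nlinarith
  · -- the even polynomial
    set n := p.totalDegree with hn
    have hr1 : CircRep (n + n) (fun a b => (A.eval a + b * B.eval a) ^ 2 +
        (A.eval a - b * B.eval a) ^ 2) := by
      have f1 : CircRep n (fun a b => A.eval a + b * B.eval a) := ⟨A, B, hA, hB, fun _ _ _ => rfl⟩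
      have f2 : CircRep n (fun a b => A.eval a - b * B.eval a) :=
        ⟨A, -B, hA, by simpa using hB, fun _ _ _ => by simp; ring⟩
      simpa [sq] using (f1.mul f1).add (f2.mul f2)
    obtain ⟨E, F, hE, -, hEF⟩ := hr1
    have hEe : ∀ a b : ℝ, a ^ 2 + b ^ 2 = 1 → E.eval a = (A.eval a + b * B.eval a) ^ 2 +
        (A.eval a - b * B.eval a) ^ 2 := by
      intro a b hab
      have e1 := hEF a b hab
      have e2 := hEF a (-b) (by linarith [neg_sq b])
      simp only at e1 e2
      linear_combination (-1 / 2) * e1 + (-1 / 2) * e2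
    have hw := walsh_poly (n + n) E hE δ (2 * M ^ 2) hδ0 (by positivity) (by
      intro a ha1 ha2
      have hd4 : δ ^ 2 ≤ 4 := by nlinarith
      have hab : a ^ 2 + (Real.sqrt (1 - a ^ 2)) ^ 2 = 1 := by
        rw [Real.sq_sqrt (by nlinarith)]; ring
      set b := Real.sqrt (1 - a ^ 2)
      have g1 := hball a b hab ha1
      have g2 := hball a (-b) (by linarith [neg_sq b]) ha1
      rw [hEe a b hab, abs_of_nonneg (by positivity)]
      have g1' := sq_le_sq' (abs_le.1 g1).1 (abs_le.1 g1).2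
      have g2' := sq_le_sq' (abs_le.1 g2).1 (abs_le.1 g2).2
      nlinarith) c (by nlinarith [sq_nonneg s]) hc
    rw [hEe c s hcs, ← hPy] at hw
    have hsq : P y ^ 2 ≤ ((4 / δ) ^ (2 * r) * M) ^ 2 := by
      have e1 : (16 / δ ^ 2) ^ (n + n) = (4 / δ) ^ (4 * n) := by
        rw [show 16 / δ ^ 2 = (4 / δ) ^ 2 by rw [div_pow]; norm_num, ← pow_mul]; congr 1; ring
      have e2 : 2 * (4 / δ) ^ (4 * n) ≤ (4 / δ) ^ (4 * r) := by
        calc 2 * (4 / δ) ^ (4 * n) ≤ (4 / δ) * (4 / δ) ^ (4 * n) := by gcongr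
          _ = (4 / δ) ^ (4 * n + 1) := by ring
          _ ≤ _ := pow_le_pow_right₀ h41 (by omega)
      have e3 : ((4 / δ) ^ (2 * r) * M) ^ 2 = (4 / δ) ^ (4 * r) * M ^ 2 := by
        rw [mul_pow, ← pow_mul]; congr 2; ring
      rw [e1] at hw
      rw [e3]
      have := mul_le_mul_of_nonneg_right e2 (sq_nonneg M)
      nlinarith [sq_nonneg (A.eval c - s * B.eval c)]
    exact abs_le_of_sq_le_sq hsq (by positivity)

/-- Bernstein–Walsh estimate on the sphere: for `P ∈ Π_r^d` and a cap `B(x,δ)`,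
`sup_{S^d} |P| ≤ (4/δ)^{2r} sup_{B(x,δ)} |P|`. -/
theorem sph_walsh (d r : ℕ) (hd : 1 ≤ d) (hr : 1 ≤ r) (P : Sph d → ℝ)
    (hP : IsSphPoly d r P) (x : Sph d) (δ : ℝ) (hδ0 : 0 < δ) (hδ2 : δ ≤ 2) :
    ∀ y : Sph d,
      |P y| ≤ (4 / δ) ^ (2 * r) * sSup ((fun z => |P z|) '' Metric.closedBall x δ) := by
  intro y
  have hbdd : BddAbove ((fun z => |P z|) '' Metric.closedBall x δ) := by
    apply IsCompact.bddAbove_image (isCompact_closedBall x δ)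
    obtain ⟨p, -, hp⟩ := hP
    have : P = fun y : Sph d => MvPolynomial.eval
      (fun i => (y : EuclideanSpace ℝ (Fin (d + 1))) i) p := funext hp
    rw [this]
    apply Continuous.continuousOn
    apply continuous_abs.comp
    apply (MvPolynomial.continuous_eval p).comp
    fun_prop
  set S := sSup ((fun z => |P z|) '' Metric.closedBall x δ) with hS
  have hle : ∀ z ∈ Metric.closedBall x δ, |P z| ≤ S := fun z hz =>
    le_csSup hbdd ⟨z, hz, rfl⟩
  have hS0 : 0 ≤ S := (abs_nonneg _).trans (hle x (Metric.mem_closedBall_self hδ0.le))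
  have hK : 0 < (4 / δ) ^ (2 * r) := by positivity
  rw [← div_le_iff₀' hK]
  refine le_of_forall_pos_le_add fun ε hε => ?_
  rw [div_le_iff₀' hK]
  exact walsh_core d r hd P hP x δ hδ0 hδ2 (S + ε) (by linarith)
    (fun z hz => (hle z hz).trans (by linarith)) y
end
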